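/- Let (A,B) be an invertible Jones pair of n×n complex matrices with A symmetric. Let F, F₁ ∈ N_A, let G, G₁, H, H₁ ∈ N_{A,B}, and let K, K₁ be paired with H, H₁ respectively. Then H∘H₁ ∈ N_A, and the Schur product M(F,G,H)∘M(F₁,G₁,H₁) equals M(F', G', H'), where F' = FF₁ + n^{-1}·Θ_A(H∘H₁)ᵀ ∈ N_A, G' = GG₁ ∈ N_{A,B}, H' = Θ_A(F)∘H₁ + Θ_A(F₁)∘H ∈ N_{A,B}, and the matrix K' = Θ_{B^(-)}(F)∘K₁ + Θ_{B^(-)}(F₁)∘K is paired with H' (and is the K-block of M(F',G',H')). -/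

import Mathlib

open Matrix

variable {m : Type*} [Fintype m] [DecidableEq m]

/-- The Schur (entrywise) inverse `A^(-)` of a matrix: `(A^(-))_{ij} = (A_{ij})⁻¹`. -/
noncomputable def sinv (A : Matrix m m ℂ) : Matrix m m ℂ := Matrix.of fun i j => (A i j)⁻¹

/-- A type-II matrix: a Schur invertible matrix `W` with `W * (W^(-))ᵀ = n • I`,
where `n` is the size of the matrix. -/
def IsTypeII (A : Matrix m m ℂ) : Prop :=
  (∀ i j, A i j ≠ 0) ∧ A * (sinv A)ᵀ = (Fintype.card m : ℂ) • (1 : Matrix m m ℂ)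

/-- `v_{ij} = (A e_i) ∘ (B e_j)`: the entrywise product of column `i` of `A`
with column `j` of `B`. -/
def colProd (A B : Matrix m m ℂ) (i j : m) : m → ℂ := fun k => A k i * B k j

/-- Membership in the Nomura algebra `N_{A,B}`: every `v_{ij}` is an eigenvector of `M`. -/
def InNomura (A B M : Matrix m m ℂ) : Prop :=
  ∀ i j, ∃ c : ℂ, M.mulVec (colProd A B i j) = c • colProd A B i j

/-- `S = Θ_{A,B}(M)`: the matrix of eigenvalues, i.e. `M v_{ij} = S_{ij} v_{ij}` for all `i,j`. -/
def IsTheta (A B M S : Matrix m m ℂ) : Prop :=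
  ∀ i j, M.mulVec (colProd A B i j) = S i j • colProd A B i j

/-- `(A,B)` is a Jones pair: `A` invertible, `B` Schur invertible, and
`X_A Δ_B X_A = Δ_B X_A Δ_B` and `X_A Δ_{Bᵀ} X_A = Δ_{Bᵀ} X_A Δ_{Bᵀ}`
as operators on matrices. -/
def IsJonesPair (A B : Matrix m m ℂ) : Prop :=
  IsUnit A ∧ (∀ i j, B i j ≠ 0) ∧
  (∀ M : Matrix m m ℂ, A * (B ⊙ (A * M)) = B ⊙ (A * (B ⊙ M))) ∧
  (∀ M : Matrix m m ℂ, A * (Bᵀ ⊙ (A * M)) = Bᵀ ⊙ (A * (Bᵀ ⊙ M)))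

/-- An invertible Jones pair: a Jones pair in which moreover `A` is Schur
invertible and `B` is invertible. -/
def IsInvertibleJonesPair (A B : Matrix m m ℂ) : Prop :=
  IsJonesPair A B ∧ (∀ i j, A i j ≠ 0) ∧ IsUnit B

/-- `W` is a spin model: for some `d` with `d² = n`, `(d⁻¹ W, W^(-))` is an
invertible Jones pair. -/
def IsSpinModel (W : Matrix m m ℂ) : Prop :=
  ∃ d : ℂ, d ^ 2 = (Fintype.card m : ℂ) ∧ IsInvertibleJonesPair (d⁻¹ • W) (sinv W)

/-- Given an invertible Jones pair `(A,B)` with `A` symmetric, `K` is paired with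
`H ∈ N_{A,B}` if `Kᵀ ∈ N_{A,Bᵀ}` and `Θ_{A,B}(H) = (Θ_{A,Bᵀ}(Kᵀ))ᵀ`. -/
def Paired (A B H K : Matrix m m ℂ) : Prop :=
  ∃ S : Matrix m m ℂ, IsTheta A B H S ∧ IsTheta A Bᵀ Kᵀ Sᵀ

/-- The `4n × 4n` matrix with `4 × 4` block structure
`[[P, Q, R, R], [Q, P, R, R], [S, S, T, U], [S, S, U, T]]`. -/
def blockMat {n : ℕ} (P Q R S T U : Matrix (Fin n) (Fin n) ℂ) :
    Matrix (Fin 4 × Fin n) (Fin 4 × Fin n) ℂ :=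
  Matrix.of fun x y =>
    (![![P, Q, R, R], ![Q, P, R, R], ![S, S, T, U], ![S, S, U, T]] x.1 y.1) x.2 y.2

/-- Yamada's `4n × 4n` matrix `V` built from `A`, `B` and `d` with `d² = n`. -/
noncomputable def Vmat {n : ℕ} (A B : Matrix (Fin n) (Fin n) ℂ) (d : ℂ) :
    Matrix (Fin 4 × Fin n) (Fin 4 × Fin n) ℂ :=
  blockMat (d • A) (-(d • A)) (sinv B) (sinv B)ᵀ (d • A) (-(d • A))

/-!
The eigenvector equations defining `S = Θ_{A,B}(M)` can be solved for `M` when one of the matrices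
is type II: they say that `Sᵀ` carries the quotients of the columns of `Aᵀ` to those of
`(Bᵀ)^(-)`, with coefficients `n M`, and equally that `S` carries the latter back to the former,
with coefficients `n Mᵀ`. For an invertible Jones pair both matrices are type II: `A ∘ (A⁻¹)ᵀ` has
rank one and all its row and column sums are `1`, so it is constant, which makes `A` type II; the
braid relation and the resulting column sums of `B` and `Bᵀ` then give the same for `B`.

Let `a`, `b`, `β` be the quotients of the columns of `A`, `(Bᵀ)^(-)`, `B^(-)`, with `A` symmetric.
Then `H` and `K` are paired through `S` exactly when `S` maps `b` to `a` with coefficients `n Hᵀ`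
and `a` to `β` with coefficients `n Kᵀ`. Composites of such maps multiply coefficients entrywise.
If `S₁` pairs `H₁ᵀ` and `K₁ᵀ`, then `n⁻² S₁ Sᵀ` preserves `a` and `β` with coefficients `H ∘ H₁` and
`K ∘ K₁`; and if `F` preserves `a` and `β`, then `F S` pairs `Θ_A(F)ᵀ ∘ H` with `Θ_{B^(-)}(F)ᵀ ∘ K`.
Since pairing is stable under transposing both matrices, this gives the mixed products.
-/

section Intertwines

variable {ι κ p q r : Type*} [Fintype p]

/-- `M` carries each vector `v i j` of one family to the multiple `S i j • w i j` of the
corresponding vector of another; the eigenvector condition `IsTheta` is the case `v = w`. -/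
def Intertwines {R : Type*} [CommSemiring R] (v : ι → κ → p → R) (w : ι → κ → q → R)
    (M : Matrix q p R) (S : Matrix ι κ R) : Prop :=
  ∀ i j, M *ᵥ v i j = S i j • w i j

namespace Intertwines

section CommSemiring

variable {R : Type*} [CommSemiring R] {v : ι → κ → p → R} {w : ι → κ → q → R}
  {M M' : Matrix q p R} {S S' : Matrix ι κ R}

protected lemma comp [Fintype q] {x : ι → κ → r → R} {N : Matrix r q R} {T : Matrix ι κ R}
    (hN : Intertwines w x N T) (hM : Intertwines v w M S) : Intertwines v x (N * M) (T ⊙ S) := by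
  intro i j
  rw [← mulVec_mulVec, hM i j, mulVec_smul, hN i j, smul_smul, mul_comm, hadamard_apply]

protected lemma add (h : Intertwines v w M S) (h' : Intertwines v w M' S') :
    Intertwines v w (M + M') (S + S') := by
  intro i j
  rw [add_mulVec, h i j, h' i j, ← add_smul, Matrix.add_apply]

protected lemma smul (c : R) (h : Intertwines v w M S) : Intertwines v w (c • M) (c • S) := by
  intro i j
  rw [smul_mulVec, h i j, smul_smul, Matrix.smul_apply, smul_eq_mul]

end CommSemiring

lemma leftInverse {K : Type*} [Semifield K] [Fintype q] [DecidableEq p]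
    {v : ι → κ → p → K} {w : ι → κ → q → K} {M : Matrix q p K}
    {N : Matrix p q K} {S : Matrix ι κ K} (h : Intertwines v w M S)
    (hNM : N * M = 1) (hS : ∀ i j, S i j ≠ 0) : Intertwines w v N (S.map (·⁻¹)) := by
  intro i j
  rw [map_apply, eq_inv_smul_iff₀ (hS i j), ← mulVec_smul, ← h i j, mulVec_mulVec, hNM,
    one_mulVec]

end Intertwines

end Intertwines

lemma colProd_comm {ι : Type*} (A B : Matrix ι ι ℂ) (i j : ι) :
    colProd A B i j = colProd B A j i :=
  funext fun _ => mul_comm _ _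

lemma natCast_card_ne_zero {ι R : Type*} [Fintype ι] [AddMonoidWithOne R] [CharZero R] (i : ι) :
    (Fintype.card ι : R) ≠ 0 :=
  Nat.cast_ne_zero.2 (Fintype.card_pos_iff.2 ⟨i⟩).ne'

lemma sinv_sinv {ι : Type*} (A : Matrix ι ι ℂ) : sinv (sinv A) = A := by
  ext i j
  exact inv_inv _

/-- The family of entrywise quotients `(A e_i) ∘ (A e_j)^(-)` of columns of `A`, whose common
eigenvector algebra is `N_A`. -/
noncomputable def colQuot {ι : Type*} (A : Matrix ι ι ℂ) : ι → ι → ι → ℂ :=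
  colProd A (sinv A)

lemma colQuot_sinv {ι : Type*} (A : Matrix ι ι ℂ) (i j : ι) :
    colQuot (sinv A) i j = colQuot A j i := by
  unfold colQuot
  rw [sinv_sinv, colProd_comm]

section IsTheta

variable {ι : Type*} [Fintype ι] {A B M M' S S' : Matrix ι ι ℂ}

lemma IsTheta.inNomura (h : IsTheta A B M S) : InNomura A B M :=
  fun i j => ⟨S i j, h i j⟩

protected lemma IsTheta.mul (h : IsTheta A B M S) (h' : IsTheta A B M' S') :
    IsTheta A B (M * M') (S ⊙ S') :=
  Intertwines.comp (w := colProd A B) h h'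

protected lemma IsTheta.add (h : IsTheta A B M S) (h' : IsTheta A B M' S') :
    IsTheta A B (M + M') (S + S') :=
  Intertwines.add (v := colProd A B) h h'

lemma isTheta_comm : IsTheta A B M S ↔ IsTheta B A M Sᵀ := by
  unfold IsTheta
  rw [forall_comm]
  simp only [colProd_comm A B, transpose_apply]

lemma isTheta_iff_mul_diagonal_mul [DecidableEq ι] :
    IsTheta A B M S ↔ ∀ j, M * diagonal (B.col j) * A =
      diagonal (B.col j) * A * diagonal (S.col j) := by
  unfold IsTheta
  rw [forall_comm]
  refine forall_congr' fun j => ?_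
  rw [← Matrix.ext_iff, forall_comm]
  refine forall_congr' fun i => funext_iff.trans (forall_congr' fun k => ?_)
  rw [mul_assoc, mul_apply, mul_diagonal, diagonal_mul]
  simp only [diagonal_mul, mulVec, dotProduct, colProd, col_apply, Pi.smul_apply, smul_eq_mul]
  simp only [mul_comm (A _ i), mul_comm (S i j)]

end IsTheta

section TypeII

variable {A B M S : Matrix m m ℂ}

namespace IsTypeII

protected lemma sinv (h : IsTypeII A) : IsTypeII (sinv A) := by
  refine ⟨fun i j => inv_ne_zero (h.1 i j), ?_⟩
  simpa [transpose_mul, sinv_sinv] using congrArg transpose h.2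

lemma isUnit (h : IsTypeII A) : IsUnit A := by
  rcases isEmpty_or_nonempty m with _ | ⟨⟨i⟩⟩
  · exact isUnit_of_subsingleton A
  · refine IsUnit.of_mul_eq_one ((Fintype.card m : ℂ)⁻¹ • (sinv A)ᵀ) ?_
    rw [Matrix.mul_smul, h.2, inv_smul_smul₀ (natCast_card_ne_zero i)]

lemma isTheta_iff_smul_mul_diagonal (hA : IsTypeII A) :
    IsTheta A B M S ↔ ∀ j, (Fintype.card m : ℂ) • (M * diagonal (B.col j)) =
      diagonal (B.col j) * A * diagonal (S.col j) * (sinv A)ᵀ := by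
  rw [isTheta_iff_mul_diagonal_mul]
  refine forall_congr' fun j => ?_
  rw [← ((isUnit_transpose _).2 hA.sinv.isUnit).mul_left_inj, mul_assoc _ A, hA.2,
    Matrix.mul_smul, mul_one]

-- For fixed `j`, let `D_C` be the diagonal matrix of column `j` of `C`. Solving the eigenvector
-- equation `M D_B A = D_B A D_S` for `D_B⁻¹ M D_B` moves the known quotients to the side of `S`.
lemma isTheta_iff_intertwines_transpose (hA : IsTypeII A) (hB : ∀ i j, B i j ≠ 0) :
    IsTheta A B M S ↔ Intertwines (colQuot Aᵀ) (colQuot (sinv Bᵀ)) Sᵀ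
      ((Fintype.card m : ℂ) • M) := by
  have entry (i j k : m) : (diagonal (B.col j) * A * diagonal (S.col j) * (sinv A)ᵀ) i k =
      B i j * (Sᵀ *ᵥ colQuot Aᵀ i k) j := by
    rw [mul_apply]
    simp only [mul_diagonal, diagonal_mul, mulVec, dotProduct, Finset.mul_sum]
    exact Finset.sum_congr rfl fun l _ => by
      simp only [colQuot, colProd, sinv, transpose_apply, of_apply, col_apply]
      ring
  have quotient (i j k : m) : colQuot (sinv Bᵀ) i k j = B k j / B i j := by
    simp only [colQuot, colProd, sinv, transpose_apply, of_apply, inv_inv, div_eq_inv_mul]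
  have solve (i j k : m) (x : ℂ) : Fintype.card m * (M i k * B k j) = B i j * x ↔
      x = Fintype.card m * M i k * (B k j / B i j) := by
    rw [← mul_div_assoc, eq_div_iff (hB i j), eq_comm, mul_comm x, mul_assoc]
  rw [hA.isTheta_iff_smul_mul_diagonal]
  simp only [Intertwines, ← Matrix.ext_iff, entry, Matrix.smul_apply, mul_diagonal, funext_iff,
    Pi.smul_apply, smul_eq_mul, quotient, col_apply, solve]
  exact ⟨fun h i k j => h j i k, fun h j i k => h i k j⟩

lemma isTheta_iff_intertwines (hB : IsTypeII B) (hA : ∀ i j, A i j ≠ 0) :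
    IsTheta A B M S ↔ Intertwines (colQuot (sinv Bᵀ)) (colQuot Aᵀ) S
      ((Fintype.card m : ℂ) • Mᵀ) := by
  rw [isTheta_comm, hB.isTheta_iff_intertwines_transpose hA]
  unfold Intertwines
  rw [forall_comm]
  simp only [colQuot_sinv, transpose_transpose, Matrix.smul_apply, transpose_apply]

lemma isTheta_dual (hA : IsTypeII A) (h : IsTheta A (sinv A) M S) :
    IsTheta Aᵀ (sinv Aᵀ) S ((Fintype.card m : ℂ) • Mᵀ) := by
  have := (hA.sinv.isTheta_iff_intertwines hA.1).1 h
  rwa [show sinv (sinv A)ᵀ = Aᵀ from sinv_sinv Aᵀ] at this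

end IsTypeII

end TypeII

section JonesPair

variable {A B : Matrix m m ℂ}

lemma isTheta_self_of_mul_hadamard {ι : Type*} [Fintype ι] {A B : Matrix ι ι ℂ}
    (h : ∀ M : Matrix ι ι ℂ, A * (B ⊙ (A * M)) = B ⊙ (A * (B ⊙ M))) : IsTheta A B A B := by
  classical
  intro i j
  funext k
  have braid := congrFun (congrFun (h (single i j 1)) k) j
  simp only [mul_apply, hadamard_apply, single_apply, mul_ite, mul_one, mul_zero, and_true,
    Finset.sum_ite_eq, Finset.mem_univ, if_true] at braid
  simp only [mulVec, dotProduct, colProd, Pi.smul_apply, smul_eq_mul, mul_comm (A _ i)]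
  rw [braid]
  ring

lemma IsTheta.mul_sum_mul_inv (h : IsTheta A B A B) (hA : IsUnit A.det) (i j k : m) :
    B i j * ∑ l, A i l * A⁻¹ l k * B l j = A i k * B k j := by
  have braid := isTheta_iff_mul_diagonal_mul.1 h j
  have conj : diagonal (B.col j) * (A * diagonal (B.col j) * A⁻¹) = A * diagonal (B.col j) := by
    rw [← mul_assoc, ← mul_assoc, ← braid, mul_nonsing_inv_cancel_right A _ hA]
  have entry := congrFun (congrFun conj i) k
  rw [diagonal_mul, mul_diagonal, mul_apply] at entry
  simpa only [mul_diagonal, mul_right_comm, col_apply] using entry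

lemma mul_eq_inv_card_of_sum_eq_one {ι K : Type*} [Fintype ι] [DivisionRing K] {a c : ι → K}
    (hrow : ∀ i, ∑ j, a i * c j = 1) (hcol : ∀ j, ∑ i, a i * c j = 1) (i j : ι) :
    a i * c j = (Fintype.card ι : K)⁻¹ := by
  have hc (k : ι) : c k = (∑ i, a i)⁻¹ :=
    eq_inv_of_mul_eq_one_right (by rw [Finset.sum_mul, hcol])
  have hrow_i := hrow i
  simp only [hc, Finset.sum_const, Finset.card_univ, nsmul_eq_mul] at hrow_i
  rw [hc j]
  exact eq_inv_of_mul_eq_one_right hrow_i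

namespace IsInvertibleJonesPair

lemma left_ne_zero (h : IsInvertibleJonesPair A B) (i j : m) : A i j ≠ 0 :=
  h.2.1 i j

lemma right_ne_zero (h : IsInvertibleJonesPair A B) (i j : m) : B i j ≠ 0 :=
  h.1.2.1 i j

lemma isUnit_det_left (h : IsInvertibleJonesPair A B) : IsUnit A.det :=
  (isUnit_iff_isUnit_det A).1 h.1.1

lemma isUnit_det_right (h : IsInvertibleJonesPair A B) : IsUnit B.det :=
  (isUnit_iff_isUnit_det B).1 h.2.2

protected lemma transpose (h : IsInvertibleJonesPair A B) :
    IsInvertibleJonesPair A Bᵀ := by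
  obtain ⟨⟨hA, hB₀, h₁, h₂⟩, hA₀, hB⟩ := h
  exact ⟨⟨hA, fun i j => hB₀ j i, h₂, h₁⟩, hA₀, (isUnit_transpose B).2 hB⟩

lemma isTheta_self (h : IsInvertibleJonesPair A B) : IsTheta A B A B :=
  isTheta_self_of_mul_hadamard h.1.2.2.1

lemma mul_inv_apply (h : IsInvertibleJonesPair A B) (i k : m) :
    A i k * A⁻¹ k i = (Fintype.card m : ℂ)⁻¹ := by
  have mul_B : (A ⊙ A⁻¹ᵀ) * B = vecMulVec A.diag 1 := by
    ext i j
    simpa [mul_apply, vecMulVec_apply, mul_comm (A i i), h.right_ne_zero i j] using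
      h.isTheta_self.mul_sum_mul_inv h.isUnit_det_left i j i
  have rank_one (i k : m) : A i k * A⁻¹ k i = A i i * (1 ᵥ* B⁻¹) k := by
    have := congrArg (· * B⁻¹) mul_B
    simp only [mul_nonsing_inv_cancel_right B _ h.isUnit_det_right, vecMulVec_mul] at this
    exact congrFun (congrFun this i) k
  rw [rank_one]
  refine mul_eq_inv_card_of_sum_eq_one (a := A.diag) (fun i => ?_) (fun k => ?_) i k
  · simp only [diag_apply, ← rank_one]
    rw [← mul_apply, mul_nonsing_inv A h.isUnit_det_left, one_apply_eq]
  · simp only [diag_apply, ← rank_one, mul_comm (A _ k)]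
    rw [← mul_apply, nonsing_inv_mul A h.isUnit_det_left, one_apply_eq]

lemma isTypeII_left (h : IsInvertibleJonesPair A B) : IsTypeII A := by
  refine ⟨h.left_ne_zero, ?_⟩
  have : (sinv A)ᵀ = (Fintype.card m : ℂ) • A⁻¹ := by
    ext k i
    change (A i k)⁻¹ = (Fintype.card m : ℂ) * A⁻¹ k i
    refine inv_eq_of_mul_eq_one_right ?_
    rw [mul_left_comm, h.mul_inv_apply, mul_inv_cancel₀ (natCast_card_ne_zero k)]
  rw [this, Matrix.mul_smul, mul_nonsing_inv A h.isUnit_det_left]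

lemma sum_col (h : IsInvertibleJonesPair A B) (i j : m) :
    ∑ k, B k j = Fintype.card m * A i i := by
  have weighted : B i j * ((Fintype.card m : ℂ)⁻¹ * ∑ k, B k j) = B i j * A i i := by
    simpa only [h.mul_inv_apply, ← Finset.mul_sum, mul_comm (A i i)] using
      h.isTheta_self.mul_sum_mul_inv h.isUnit_det_left i j i
  rw [← mul_left_cancel₀ (h.right_ne_zero i j) weighted,
    mul_inv_cancel_left₀ (natCast_card_ne_zero i)]

lemma isTypeII_right (h : IsInvertibleJonesPair A B) : IsTypeII B := by
  refine ⟨h.right_ne_zero, ?_⟩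
  ext l i
  refine mul_left_cancel₀ (h.left_ne_zero i l) ?_
  calc A i l * (B * (sinv B)ᵀ) l i
      = ∑ j, ∑ k, A i k * A⁻¹ k l * B k j := by
        rw [mul_apply, Finset.mul_sum]
        refine Finset.sum_congr rfl fun j _ => mul_left_cancel₀ (h.right_ne_zero i j) ?_
        rw [h.isTheta_self.mul_sum_mul_inv h.isUnit_det_left]
        simp only [sinv, transpose_apply, of_apply]
        field_simp [h.right_ne_zero i j]
    _ = ∑ k, A i k * A⁻¹ k l * (Fintype.card m * A i i) := by
        rw [Finset.sum_comm]
        refine Finset.sum_congr rfl fun k _ => ?_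
        rw [← Finset.mul_sum, ← h.transpose.sum_col i k]
        simp only [transpose_apply]
    _ = (1 : Matrix m m ℂ) i l * (Fintype.card m * A i i) := by
        rw [← Finset.sum_mul, ← mul_apply, mul_nonsing_inv A h.isUnit_det_left]
    _ = A i l * ((Fintype.card m : ℂ) • (1 : Matrix m m ℂ)) l i := by
        rcases eq_or_ne i l with rfl | hil
        · simp [mul_comm]
        · simp [hil, hil.symm]

end IsInvertibleJonesPair

end JonesPair

section Pairing

namespace IsInvertibleJonesPair

variable {A B M S : Matrix m m ℂ}

lemma isTheta_iff_intertwines_transpose (h : IsInvertibleJonesPair A B) (hA : A.IsSymm) :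
    IsTheta A B M S ↔ Intertwines (colQuot A) (colQuot (sinv Bᵀ)) Sᵀ
      ((Fintype.card m : ℂ) • M) := by
  rw [h.isTypeII_left.isTheta_iff_intertwines_transpose h.right_ne_zero, hA.eq]

lemma isTheta_iff_intertwines (h : IsInvertibleJonesPair A B) (hA : A.IsSymm) :
    IsTheta A B M S ↔ Intertwines (colQuot (sinv Bᵀ)) (colQuot A) S
      ((Fintype.card m : ℂ) • Mᵀ) := by
  rw [h.isTypeII_right.isTheta_iff_intertwines h.left_ne_zero, hA.eq]

lemma intertwines_transpose (h : IsInvertibleJonesPair A B) (hA : A.IsSymm) :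
    Intertwines (colQuot A) (colQuot (sinv Bᵀ)) Bᵀ ((Fintype.card m : ℂ) • A) :=
  (h.isTheta_iff_intertwines_transpose hA).1 h.isTheta_self

lemma card_smul_apply_ne_zero (h : IsInvertibleJonesPair A B) (i j : m) :
    ((Fintype.card m : ℂ) • A) i j ≠ 0 :=
  mul_ne_zero (natCast_card_ne_zero i) (h.left_ne_zero i j)

lemma intertwines_inv (h : IsInvertibleJonesPair A B) (hA : A.IsSymm) :
    Intertwines (colQuot A) (colQuot (sinv Bᵀ)) B⁻¹
      (((Fintype.card m : ℂ) • A).map (·⁻¹)) := by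
  have := (h.isTheta_iff_intertwines hA).1 h.isTheta_self
  rw [hA.eq] at this
  exact this.leftInverse (nonsing_inv_mul B h.isUnit_det_right) h.card_smul_apply_ne_zero

end IsInvertibleJonesPair

lemma hadamard_hadamard_map_inv_cancel {ι κ K : Type*} [CommGroupWithZero K] {X : Matrix ι κ K}
    (hX : ∀ i j, X i j ≠ 0) (Y : Matrix ι κ K) : X ⊙ Y ⊙ X.map (·⁻¹) = Y := by
  ext i j
  simp only [hadamard_apply, map_apply]
  rw [mul_comm (X i j), mul_inv_cancel_right₀ (hX i j)]

namespace Paired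

protected lemma add {ι : Type*} [Fintype ι] {A B H K H₁ K₁ : Matrix ι ι ℂ}
    (hHK : Paired A B H K) (hHK₁ : Paired A B H₁ K₁) : Paired A B (H + H₁) (K + K₁) := by
  obtain ⟨S, hH, hK⟩ := hHK
  obtain ⟨S₁, hH₁, hK₁⟩ := hHK₁
  exact ⟨S + S₁, hH.add hH₁, by simpa only [transpose_add] using hK.add hK₁⟩

lemma inNomura_left {ι : Type*} [Fintype ι] {A B H K : Matrix ι ι ℂ} (hHK : Paired A B H K) :
    InNomura A B H := by
  obtain ⟨S, hH, -⟩ := hHK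
  exact hH.inNomura

variable {A B F H K H₁ K₁ SF TF : Matrix m m ℂ}

-- Both `Bᵀ` and `B⁻¹` lead from the quotients of `A` to those of `sinv Bᵀ`, with inverse
-- coefficients, so passing from `S` to `Bᵀ S B⁻¹` reverses the direction but not the coefficients.
protected lemma transpose (hHK : Paired A B H K) (h : IsInvertibleJonesPair A B)
    (hA : A.IsSymm) : Paired A B Hᵀ Kᵀ := by
  obtain ⟨S, hH, hK⟩ := hHK
  have hn := h.card_smul_apply_ne_zero
  refine ⟨(Bᵀ * S * B⁻¹)ᵀ, ?_, ?_⟩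
  · have := ((h.intertwines_transpose hA).comp ((h.isTheta_iff_intertwines hA).1 hH)).comp
      (h.intertwines_inv hA)
    rw [hadamard_hadamard_map_inv_cancel hn] at this
    exact (h.isTheta_iff_intertwines_transpose hA).2 this
  · have := (h.transpose.intertwines_inv hA).comp
      (((h.transpose.isTheta_iff_intertwines hA).1 hK).comp
        (h.transpose.intertwines_transpose hA))
    rw [hadamard_comm, hadamard_comm _ (_ • A), hadamard_hadamard_map_inv_cancel hn] at this
    rw [h.transpose.isTheta_iff_intertwines_transpose hA]
    simpa [transpose_mul, transpose_nonsing_inv] using this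

lemma hadamard_theta_transpose (hHK : Paired A B H K) (h : IsInvertibleJonesPair A B)
    (hA : A.IsSymm) (hSF : IsTheta A (sinv A) F SF)
    (hTF : IsTheta (sinv B) (sinv (sinv B)) F TF) :
    Paired A B (SFᵀ ⊙ H) (TFᵀ ⊙ K) := by
  obtain ⟨S, hH, hK⟩ := hHK
  refine ⟨F * S, ?_, ?_⟩
  · rw [h.isTheta_iff_intertwines hA, transpose_hadamard, transpose_transpose, ← hadamard_smul]
    exact Intertwines.comp hSF ((h.isTheta_iff_intertwines hA).1 hH)
  · rw [h.transpose.isTheta_iff_intertwines_transpose hA, transpose_hadamard, transpose_transpose,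
      ← hadamard_smul]
    exact Intertwines.comp hTF ((h.transpose.isTheta_iff_intertwines_transpose hA).1 hK)

lemma theta_hadamard (hHK : Paired A B H K) (h : IsInvertibleJonesPair A B)
    (hA : A.IsSymm) (hSF : IsTheta A (sinv A) F SF)
    (hTF : IsTheta (sinv B) (sinv (sinv B)) F TF) :
    Paired A B (SF ⊙ H) (TF ⊙ K) := by
  simpa only [transpose_hadamard, transpose_transpose] using
    ((hHK.transpose h hA).hadamard_theta_transpose h hA hSF hTF).transpose h hA

lemma exists_isTheta_hadamard (hHK : Paired A B H K) (hHK₁ : Paired A B H₁ K₁)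
    (h : IsInvertibleJonesPair A B) (hA : A.IsSymm) :
    ∃ Z, IsTheta A (sinv A) Z (H ⊙ H₁) ∧ IsTheta (sinv B) (sinv (sinv B)) Z (K ⊙ K₁) := by
  obtain ⟨S, hH, hK⟩ := hHK
  obtain ⟨S₁, hH₁, hK₁⟩ := hHK₁.transpose h hA
  have scale (X Y : Matrix m m ℂ) : ((Fintype.card m : ℂ) ^ 2)⁻¹ •
      (((Fintype.card m : ℂ) • X) ⊙ ((Fintype.card m : ℂ) • Y)) = Y ⊙ X := by
    ext i j
    have := natCast_card_ne_zero (R := ℂ) i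
    simp only [Matrix.smul_apply, hadamard_apply, smul_eq_mul]
    field_simp
  refine ⟨((Fintype.card m : ℂ) ^ 2)⁻¹ • (S₁ * Sᵀ), ?_, ?_⟩
  · have := (((h.isTheta_iff_intertwines hA).1 hH₁).comp
      ((h.isTheta_iff_intertwines_transpose hA).1 hH)).smul ((Fintype.card m : ℂ) ^ 2)⁻¹
    simp only [transpose_transpose, scale] at this
    exact this
  · have := (((h.transpose.isTheta_iff_intertwines_transpose hA).1 hK₁).comp
      ((h.transpose.isTheta_iff_intertwines hA).1 hK)).smul ((Fintype.card m : ℂ) ^ 2)⁻¹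
    simp only [transpose_transpose, scale] at this
    exact this

end Paired

end Pairing

section BlockMatrix

lemma blockMat_hadamard {n : ℕ} (P Q R S T U P' Q' R' S' T' U' : Matrix (Fin n) (Fin n) ℂ) :
    blockMat P Q R S T U ⊙ blockMat P' Q' R' S' T' U' =
      blockMat (P ⊙ P') (Q ⊙ Q') (R ⊙ R') (S ⊙ S') (T ⊙ T') (U ⊙ U') := by
  ext ⟨x, i⟩ ⟨y, j⟩
  fin_cases x <;> fin_cases y <;> rfl

lemma add_hadamard_add {ι κ R : Type*} [CommSemiring R] (X Y X' Y' : Matrix ι κ R) :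
    (X + Y) ⊙ (X' + Y') = X ⊙ X' + Y ⊙ Y' + (X ⊙ Y' + X' ⊙ Y) := by
  ext i j
  simp only [hadamard_apply, Matrix.add_apply]
  ring

lemma sub_hadamard_sub {ι κ R : Type*} [CommRing R] (X Y X' Y' : Matrix ι κ R) :
    (X - Y) ⊙ (X' - Y') = X ⊙ X' + Y ⊙ Y' - (X ⊙ Y' + X' ⊙ Y) := by
  ext i j
  simp only [hadamard_apply, Matrix.add_apply, Matrix.sub_apply]
  ring

end BlockMatrix

theorem blockMat_schur {n : ℕ} (hn : 0 < n) (A B : Matrix (Fin n) (Fin n) ℂ)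
    (h : IsInvertibleJonesPair A B) (hAs : Aᵀ = A)
    (F F₁ G G₁ H H₁ K K₁ SF SF₁ TF TF₁ SG SG₁ SGt SG₁t : Matrix (Fin n) (Fin n) ℂ)
    (hSF : IsTheta A (sinv A) F SF) (hSF₁ : IsTheta A (sinv A) F₁ SF₁)
    (hTF : IsTheta (sinv B) (sinv (sinv B)) F TF)
    (hTF₁ : IsTheta (sinv B) (sinv (sinv B)) F₁ TF₁)
    (hSG : IsTheta A B G SG) (hSG₁ : IsTheta A B G₁ SG₁)
    (hSGt : IsTheta A B Gᵀ SGt) (hSG₁t : IsTheta A B G₁ᵀ SG₁t)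
    (hHK : Paired A B H K) (hHK₁ : Paired A B H₁ K₁) :
    InNomura A (sinv A) (H ⊙ H₁) ∧
    ∃ SHH : Matrix (Fin n) (Fin n) ℂ, IsTheta A (sinv A) (H ⊙ H₁) SHH ∧
      (InNomura A (sinv A) (F * F₁ + (n : ℂ)⁻¹ • SHHᵀ) ∧
       InNomura A B (G * G₁) ∧
       InNomura A B (SF ⊙ H₁ + SF₁ ⊙ H) ∧
       Paired A B (SF ⊙ H₁ + SF₁ ⊙ H) (TF ⊙ K₁ + TF₁ ⊙ K) ∧
       ∃ SF' TF' SG' SG't : Matrix (Fin n) (Fin n) ℂ,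
         IsTheta A (sinv A) (F * F₁ + (n : ℂ)⁻¹ • SHHᵀ) SF' ∧
         IsTheta (sinv B) (sinv (sinv B)) (F * F₁ + (n : ℂ)⁻¹ • SHHᵀ) TF' ∧
         IsTheta A B (G * G₁) SG' ∧
         IsTheta A B (G * G₁)ᵀ SG't ∧
         blockMat (SF + H) (SF - H) SG SGtᵀ (TF + K) (TF - K) ⊙
             blockMat (SF₁ + H₁) (SF₁ - H₁) SG₁ SG₁tᵀ (TF₁ + K₁) (TF₁ - K₁) =
           blockMat (SF' + (SF ⊙ H₁ + SF₁ ⊙ H)) (SF' - (SF ⊙ H₁ + SF₁ ⊙ H))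
             SG' SG'tᵀ
             (TF' + (TF ⊙ K₁ + TF₁ ⊙ K)) (TF' - (TF ⊙ K₁ + TF₁ ⊙ K))) := by
  obtain ⟨Z, hZA, hZB⟩ := hHK.exists_isTheta_hadamard hHK₁ h hAs
  have hHH : IsTheta A (sinv A) (H ⊙ H₁) ((n : ℂ) • Zᵀ) := by
    simpa only [hAs, Fintype.card_fin] using h.isTypeII_left.isTheta_dual hZA
  have hZ : (n : ℂ)⁻¹ • ((n : ℂ) • Zᵀ)ᵀ = Z := by
    rw [transpose_smul, transpose_transpose, inv_smul_smul₀ (Nat.cast_ne_zero.2 hn.ne')]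
  have hF' := (hSF.mul hSF₁).add hZA
  have hG' := hSG.mul hSG₁
  have hGt' : IsTheta A B (G * G₁)ᵀ (SG₁t ⊙ SGt) := by
    simpa only [transpose_mul] using hSG₁t.mul hSGt
  have hHK' := (hHK₁.theta_hadamard h hAs hSF hTF).add (hHK.theta_hadamard h hAs hSF₁ hTF₁)
  refine ⟨hHH.inNomura, _, hHH, ?_⟩
  rw [hZ]
  refine ⟨hF'.inNomura, hG'.inNomura, hHK'.inNomura_left, hHK', _, _, _, _, hF',
    (hTF.mul hTF₁).add hZB, hG', hGt', ?_⟩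
  simp only [blockMat_hadamard, add_hadamard_add, sub_hadamard_sub, transpose_hadamard,
    hadamard_comm SG₁tᵀ]
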